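/- Let p, q, s be integers with 2 ≤ q < p and s > 0. Then the braid (σ_1⋯σ_{p−1})^q (σ_1⋯σ_{q−1})^{qs} in B_p is Markov equivalent to the braid (σ_1⋯σ_{q−1})^{p+qs} in B_q; that is, the K-link K((p,q),(q,qs)) is equal to the torus link T(q, p+qs). -/

import Mathlib

/-!
Write `δ_n = σ_1⋯σ_{n-1}` and `η = σ_{q-1}⋯σ_1`. The link is simplified one strand at a time.

For `q ≤ m` the identity `δ_{m+1}^q = δ_m^q (σ_m σ_{m-1}⋯σ_{m-q+1})` (`asc_pow_eq`) holds in
`B_{m+1}`, so `δ_{m+1}^q β` with `β ∈ B_q` contains `σ_m` only once and, after a conjugation,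
destabilizes to `δ_m^q (σ_{m-1}⋯σ_{m-q+1}) β` in `B_m`. Conjugation by `δ_m` shifts indices
cyclically, so `δ_m^q (σ_{m-1}⋯σ_{m-q+1}) = η δ_m^q` (`asc_pow_mul_descFrom`), and another
conjugation yields `δ_m^q β η` (`markov_step`). Iterating, `δ_p^q β` is Markov equivalent to
`δ_q^q β η^{p-q}` in `B_q`, for every `β ∈ B_q` (`markov_iterate`).

For `β = δ_q^{qs}` the factor `δ_q^{q+qs}` is central, and `η` is conjugate to `δ_q` by a half
twist (`twist_mul_descFrom`), so this braid is conjugate to `δ_q^{p+qs}`.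
-/

/-- The braid relations on `n` generators `σ_1, …, σ_n` (generator `i : Fin n`
represents `σ_{i+1}`). -/
def braidRels (n : ℕ) : Set (FreeGroup (Fin n)) :=
  { r | (∃ i j : Fin n, (i : ℕ) + 1 = j ∧
          r = FreeGroup.of i * FreeGroup.of j * FreeGroup.of i *
              (FreeGroup.of j * FreeGroup.of i * FreeGroup.of j)⁻¹) ∨
        (∃ i j : Fin n, (i : ℕ) + 2 ≤ j ∧
          r = FreeGroup.of i * FreeGroup.of j * (FreeGroup.of j * FreeGroup.of i)⁻¹) }

/-- The braid group `B_n` on `n` strands, presented by generators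
`σ_1, …, σ_{n-1}` and the braid relations. -/
def BraidGroup (n : ℕ) : Type := PresentedGroup (braidRels (n - 1))

instance (n : ℕ) : Group (BraidGroup n) := by unfold BraidGroup; infer_instance

/-- The generator `σ_i` of `B_n` (defined for `1 ≤ i ≤ n - 1`, junk value `1` otherwise). -/
def σ (n i : ℕ) : BraidGroup n :=
  if h : 1 ≤ i ∧ i < n then PresentedGroup.of (⟨i - 1, by omega⟩ : Fin (n - 1)) else 1

lemma braidRels_map {m n : ℕ} (h : m ≤ n) {r : FreeGroup (Fin m)} (hr : r ∈ braidRels m) :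
    FreeGroup.map (Fin.castLE h) r ∈ braidRels n := by
  rcases hr with ⟨i, j, hij, rfl⟩ | ⟨i, j, hij, rfl⟩
  · exact Or.inl ⟨Fin.castLE h i, Fin.castLE h j, by simpa using hij,
      by simp [map_mul, map_inv, FreeGroup.map.of]⟩
  · exact Or.inr ⟨Fin.castLE h i, Fin.castLE h j, by simpa using hij,
      by simp [map_mul, map_inv, FreeGroup.map.of]⟩

/-- The inclusion homomorphism `ι : B_m → B_n` for `m ≤ n`, sending `σ_i` to `σ_i`. -/
def braidInclude {m n : ℕ} (h : m ≤ n) : BraidGroup m →* BraidGroup n :=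
  PresentedGroup.toGroup
    (f := fun i => (PresentedGroup.of (Fin.castLE (Nat.sub_le_sub_right h 1) i) :
      PresentedGroup (braidRels (n - 1))))
    (by
      intro r hr
      have key : (FreeGroup.lift fun i =>
            (PresentedGroup.of (Fin.castLE (Nat.sub_le_sub_right h 1) i) :
              PresentedGroup (braidRels (n - 1)))) =
          (PresentedGroup.mk (braidRels (n - 1))).comp
            (FreeGroup.map (Fin.castLE (Nat.sub_le_sub_right h 1))) := by
        apply FreeGroup.ext_hom
        intro a
        simp [PresentedGroup.of, FreeGroup.map.of]
      rw [key]
      simp only [MonoidHom.comp_apply]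
      have hmem : FreeGroup.map (Fin.castLE (Nat.sub_le_sub_right h 1)) r ∈
          braidRels (n - 1) := braidRels_map _ hr
      exact (QuotientGroup.eq_one_iff _).2 (Subgroup.subset_normalClosure hmem))

/-- The word `σ_lo σ_{lo+1} ⋯ σ_hi` in `B_n`. -/
def ascFrom (n lo hi : ℕ) : BraidGroup n :=
  ((List.range (hi + 1 - lo)).map fun i => σ n (lo + i)).prod

/-- The word `σ_1 σ_2 ⋯ σ_r` in `B_n`. -/
def asc (n r : ℕ) : BraidGroup n := ascFrom n 1 r

/-- The word `(σ_1⋯σ_top)(σ_1⋯σ_{top-1})⋯(σ_1⋯σ_bot)` in `B_n`. -/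
def descWord (n top bot : ℕ) : BraidGroup n :=
  ((List.range (top + 1 - bot)).map fun i => asc n (top - i)).prod

/-- The positive half-twist word `Δ_n = (σ_1⋯σ_{n-1})(σ_1⋯σ_{n-2})⋯(σ_1σ_2)(σ_1)` in `B_n`. -/
def halfTwist (n : ℕ) : BraidGroup n := descWord n (n - 1) 1

/-- The negative half-twist word
`N_n = (σ_{n-1}⁻¹⋯σ_1⁻¹)(σ_{n-1}⁻¹⋯σ_2⁻¹)⋯(σ_{n-1}⁻¹σ_{n-2}⁻¹)(σ_{n-1}⁻¹)` in `B_n`. -/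
def negHalfTwist (n : ℕ) : BraidGroup n :=
  ((List.range (n - 1)).map fun i => (ascFrom n (i + 1) (n - 1))⁻¹).prod

/-- One elementary Markov move on the disjoint union of the braid groups:
conjugation, or positive/negative stabilization. -/
inductive MarkovStep : ((n : ℕ) × BraidGroup n) → ((n : ℕ) × BraidGroup n) → Prop
  | conj {n : ℕ} (α β : BraidGroup n) : MarkovStep ⟨n, β⟩ ⟨n, α * β * α⁻¹⟩
  | stabPos {n : ℕ} (β : BraidGroup n) :
      MarkovStep ⟨n, β⟩ ⟨n + 1, braidInclude (Nat.le_succ n) β * σ (n + 1) n⟩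
  | stabNeg {n : ℕ} (β : BraidGroup n) :
      MarkovStep ⟨n, β⟩ ⟨n + 1, braidInclude (Nat.le_succ n) β * (σ (n + 1) n)⁻¹⟩

/-- Markov equivalence: the smallest equivalence relation generated by the Markov moves.
Two braids are Markov equivalent iff their closures are isotopic links. -/
def MarkovEquiv (x y : (n : ℕ) × BraidGroup n) : Prop :=
  Relation.EqvGen MarkovStep x y

/-! ### Relations between the generators -/

lemma σ_of {n i : ℕ} (h : 1 ≤ i ∧ i < n) :
    σ n i = (PresentedGroup.of (⟨i - 1, by omega⟩ : Fin (n - 1)) :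
      PresentedGroup (braidRels (n - 1))) := by
  exact dif_pos h

lemma σ_junk {n i : ℕ} (h : ¬(1 ≤ i ∧ i < n)) : σ n i = 1 := dif_neg h

lemma σ_braid {n i : ℕ} (h1 : 1 ≤ i) (h2 : i + 1 < n) :
    σ n i * σ n (i + 1) * σ n i = σ n (i + 1) * σ n i * σ n (i + 1) := by
  rw [σ_of ⟨h1, by omega⟩, σ_of ⟨by omega, h2⟩]
  have hmem : (FreeGroup.of (⟨i - 1, by omega⟩ : Fin (n - 1)) *
      FreeGroup.of (⟨i + 1 - 1, by omega⟩ : Fin (n - 1)) *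
      FreeGroup.of (⟨i - 1, by omega⟩ : Fin (n - 1)) *
      (FreeGroup.of (⟨i + 1 - 1, by omega⟩ : Fin (n - 1)) *
      FreeGroup.of (⟨i - 1, by omega⟩ : Fin (n - 1)) *
      FreeGroup.of (⟨i + 1 - 1, by omega⟩ : Fin (n - 1)))⁻¹) ∈ braidRels (n - 1) :=
    Or.inl ⟨_, _, by simp only []; omega, rfl⟩
  have h := PresentedGroup.one_of_mem hmem
  rw [map_mul, map_inv, mul_inv_eq_one] at h
  rw [map_mul, map_mul, map_mul, map_mul] at h
  exact h

lemma σ_comm {n i j : ℕ} (hij : i + 2 ≤ j) : Commute (σ n i) (σ n j) := by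
  by_cases hi : 1 ≤ i ∧ i < n
  swap
  · rw [σ_junk hi]; exact Commute.one_left _
  by_cases hj : 1 ≤ j ∧ j < n
  swap
  · rw [σ_junk hj]; exact Commute.one_right _
  rw [σ_of hi, σ_of hj]
  have hmem : (FreeGroup.of (⟨i - 1, by omega⟩ : Fin (n - 1)) *
      FreeGroup.of (⟨j - 1, by omega⟩ : Fin (n - 1)) *
      (FreeGroup.of (⟨j - 1, by omega⟩ : Fin (n - 1)) *
      FreeGroup.of (⟨i - 1, by omega⟩ : Fin (n - 1)))⁻¹) ∈ braidRels (n - 1) :=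
    Or.inr ⟨_, _, by simp only []; omega, rfl⟩
  have h := PresentedGroup.one_of_mem hmem
  rw [map_mul, map_inv, mul_inv_eq_one] at h
  rw [map_mul, map_mul] at h
  exact h

lemma include_σ {m n i : ℕ} (h : m ≤ n) (hi : i < m) :
    braidInclude h (σ m i) = σ n i := by
  by_cases h1 : 1 ≤ i
  · rw [σ_of ⟨h1, hi⟩, σ_of ⟨h1, by omega⟩]
    exact PresentedGroup.toGroup.of _
  · rw [σ_junk (by omega), σ_junk (by omega), map_one]

lemma include_include {l m n : ℕ} (h : l ≤ m) (h' : m ≤ n) (β : BraidGroup l) :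
    braidInclude h' (braidInclude h β) = braidInclude (h.trans h') β := by
  have : (braidInclude h').comp (braidInclude h) = braidInclude (h.trans h') := by
    apply PresentedGroup.ext
    intro i
    have e : (PresentedGroup.of i : PresentedGroup (braidRels (l - 1))) = σ l (i + 1) := by
      rw [σ_of ⟨by omega, by omega⟩]; rfl
    rw [e]
    change braidInclude h' (braidInclude h (σ l (i + 1))) = braidInclude (h.trans h') (σ l (i + 1))
    rw [include_σ _ (by omega), include_σ _ (by omega), include_σ _ (by omega)]
  exact DFunLike.congr_fun this β

lemma include_self {n : ℕ} (β : BraidGroup n) : braidInclude le_rfl β = β := by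
  have : braidInclude (le_refl n) = MonoidHom.id _ := by
    apply PresentedGroup.ext
    intro i
    have e : (PresentedGroup.of i : PresentedGroup (braidRels (n - 1))) = σ n (i + 1) := by
      rw [σ_of ⟨by omega, by omega⟩]; rfl
    rw [e]
    change braidInclude (le_refl n) (σ n (i + 1)) = σ n (i + 1)
    rw [include_σ _ (by omega)]
  exact DFunLike.congr_fun this β

/-! ### Ascending and descending words -/

lemma asc_zero (n : ℕ) : asc n 0 = 1 := by simp [asc, ascFrom]

lemma asc_succ (n k : ℕ) : asc n (k + 1) = asc n k * σ n (k + 1) := by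
  simp [asc, ascFrom, List.range_succ, Nat.add_comm 1 k]

/-- The word `σ_{a+k} σ_{a+k-1} ⋯ σ_{a+1}` in `B_n`, of length `k`. -/
def descFrom (n a : ℕ) : ℕ → BraidGroup n
  | 0 => 1
  | k + 1 => σ n (a + k + 1) * descFrom n a k

lemma include_asc {m n k : ℕ} (h : m ≤ n) (hk : k < m) :
    braidInclude h (asc m k) = asc n k := by
  induction k with
  | zero => simp [asc_zero]
  | succ k ih => rw [asc_succ, asc_succ, map_mul, ih (by omega), include_σ h hk]

lemma include_descFrom {m n a k : ℕ} (h : m ≤ n) (hk : a + k < m) :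
    braidInclude h (descFrom m a k) = descFrom n a k := by
  induction k with
  | zero => simp [descFrom]
  | succ k ih => rw [descFrom, descFrom, map_mul, ih (by omega), include_σ h (by omega)]

lemma asc_comm {n k j : ℕ} (h : k + 2 ≤ j) : Commute (asc n k) (σ n j) := by
  induction k with
  | zero => rw [asc_zero]; exact Commute.one_left _
  | succ k ih => rw [asc_succ]; exact (ih (by omega)).mul_left (σ_comm (by omega))

/-- Conjugation by `σ_1⋯σ_m` raises the index of a generator by one. -/
lemma σ_mul_asc {n m i : ℕ} (hi : 1 ≤ i) (him : i + 1 ≤ m) (hm : m < n) :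
    σ n (i + 1) * asc n m = asc n m * σ n i := by
  induction m with
  | zero => omega
  | succ m ih =>
    rcases Nat.lt_or_ge i m with h | h
    · have hc : Commute (σ n i) (σ n (m + 1)) := σ_comm (by omega)
      rw [asc_succ, ← mul_assoc, ih (by omega) (by omega), mul_assoc, hc.eq, mul_assoc]
    · obtain ⟨k, rfl⟩ : ∃ k, i = k + 1 := ⟨i - 1, by omega⟩
      obtain rfl : m = k + 1 := by omega
      have hc : Commute (asc n k) (σ n (k + 1 + 1)) := asc_comm (by omega)
      rw [asc_succ, asc_succ, ← mul_assoc, ← mul_assoc, ← hc.eq]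
      simp only [mul_assoc]
      have := σ_braid (n := n) (i := k + 1) (by omega) (by omega)
      simp only [mul_assoc] at this
      rw [this]

lemma descFrom_mul_asc {n m a k : ℕ} (h : a + 1 + k ≤ m) (hm : m < n) :
    descFrom n (a + 1) k * asc n m = asc n m * descFrom n a k := by
  induction k with
  | zero => simp [descFrom]
  | succ k ih =>
    rw [descFrom, descFrom, mul_assoc, ih (by omega), ← mul_assoc,
      show a + 1 + k + 1 = (a + k + 1) + 1 by omega,
      σ_mul_asc (by omega) (by omega) hm, mul_assoc]

/-- Splitting the last strand off a power of `σ_1⋯σ_{m+1}`; here `m + 1 = a + k`. -/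
lemma asc_pow_eq {n m : ℕ} (hm : m + 1 < n) (a k : ℕ) (h : a + k = m + 1) :
    asc n (m + 1) ^ k = asc n m ^ k * descFrom n a k := by
  induction k generalizing a with
  | zero => simp [descFrom]
  | succ k ih =>
    rw [pow_succ, ih (a + 1) (by omega), mul_assoc, descFrom_mul_asc (by omega) hm, asc_succ,
      pow_succ, descFrom, show a + k + 1 = m + 1 by omega]
    simp only [mul_assoc]

lemma asc_pow_mul_σ {n m i : ℕ} (k : ℕ) (hi : 1 ≤ i) (him : i + k ≤ m) (hm : m < n) :
    asc n m ^ k * σ n i = σ n (i + k) * asc n m ^ k := by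
  induction k with
  | zero => simp
  | succ k ih =>
    rw [pow_succ', mul_assoc, ih (by omega), ← mul_assoc,
      ← σ_mul_asc (by omega) (by omega) hm, mul_assoc, ← add_assoc]

lemma ascFrom_two_shift {n m : ℕ} (k : ℕ) (hk : k + 1 ≤ m) (hm : m < n) :
    ascFrom n 2 (k + 1) * asc n m = asc n m * asc n k := by
  induction k with
  | zero => simp [ascFrom, asc]
  | succ k ih =>
    have e : ascFrom n 2 (k + 1 + 1) = ascFrom n 2 (k + 1) * σ n (k + 1 + 1) := by
      simp [ascFrom, List.range_succ, show 2 + k = k + 1 + 1 by omega]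
    rw [e, mul_assoc, σ_mul_asc (by omega) hk hm, ← mul_assoc, ih (by omega), asc_succ, mul_assoc]

/-- The wrap-around of the cyclic shift: the top generator becomes the bottom one after two
conjugations by `σ_1⋯σ_m`. -/
lemma asc_sq_mul_σ {n m : ℕ} (hm1 : 1 ≤ m) (hm : m < n) :
    asc n m ^ 2 * σ n m = σ n 1 * asc n m ^ 2 := by
  obtain ⟨k, rfl⟩ : ∃ k, m = k + 1 := ⟨m - 1, by omega⟩
  have e1 : asc n (k + 1) = σ n 1 * ascFrom n 2 (k + 1) := by
    simp [asc, ascFrom, List.range_succ_eq_map, List.map_map, Function.comp_def]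
    congr 3
    funext i
    congr 1
    omega
  have e2 : asc n (k + 1) ^ 2 = ascFrom n 2 (k + 1) * asc n (k + 1) * σ n (k + 1) := by
    rw [ascFrom_two_shift k le_rfl hm, mul_assoc, ← asc_succ, pow_two]
  calc asc n (k + 1) ^ 2 * σ n (k + 1)
      = σ n 1 * ascFrom n 2 (k + 1) * asc n (k + 1) * σ n (k + 1) := by rw [← e1, pow_two]
    _ = σ n 1 * (ascFrom n 2 (k + 1) * asc n (k + 1) * σ n (k + 1)) := by simp only [mul_assoc]
    _ = _ := by rw [← e2]

/-- The cyclic index shift by `q` modulo `m + 1`; here `m + 1 = a + q`, and `a = 0` is the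
centrality of the full twist. -/
lemma asc_pow_mul_σ_wrap {n m a q j : ℕ} (h : a + q = m + 1) (hj : 1 ≤ j) (hjq : j < q)
    (hm : m < n) : asc n m ^ q * σ n (a + j) = σ n j * asc n m ^ q := by
  obtain ⟨i, rfl⟩ : ∃ i, j = 1 + i := ⟨j - 1, by omega⟩
  obtain ⟨l, rfl⟩ : ∃ l, q = i + 2 + l := ⟨q - (i + 2), by omega⟩
  rw [pow_add, mul_assoc, asc_pow_mul_σ l (by omega) (by omega) hm,
    show a + (1 + i) + l = m by omega, pow_add, mul_assoc, ← mul_assoc (asc n m ^ 2),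
    asc_sq_mul_σ (by omega) hm]
  simp only [← mul_assoc]
  rw [asc_pow_mul_σ i le_rfl (by omega) hm]

lemma asc_pow_mul_descFrom {n m a q k : ℕ} (h : a + q = m + 1) (hk : k < q) (hm : m < n) :
    asc n m ^ q * descFrom n a k = descFrom n 0 k * asc n m ^ q := by
  induction k with
  | zero => simp [descFrom]
  | succ k ih =>
    rw [descFrom, descFrom, ← mul_assoc, add_assoc, asc_pow_mul_σ_wrap h (by omega) hk hm,
      mul_assoc, ih (by omega), mul_assoc, zero_add]

/-- The half twist on the first `k` strands, as a word in `σ_1, …, σ_{k-1}` of `B_n`. -/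
def twist (n : ℕ) : ℕ → BraidGroup n
  | 0 => 1
  | k + 1 => asc n k * twist n k

lemma twist_comm {n k j : ℕ} (h : k + 1 ≤ j) : Commute (twist n k) (σ n j) := by
  induction k with
  | zero => exact Commute.one_left _
  | succ k ih => exact (asc_comm (by omega)).mul_left (ih (by omega))

lemma twist_mul_descFrom (n k : ℕ) : twist n k * descFrom n 0 k = asc n k * twist n k := by
  induction k with
  | zero => simp [descFrom, asc_zero]
  | succ k ih =>
    have hc : Commute (twist n k) (σ n (k + 1)) := twist_comm le_rfl
    rw [descFrom, zero_add, twist, mul_assoc, ← mul_assoc (twist n k), hc.eq, mul_assoc, ih,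
      ← mul_assoc, ← asc_succ]

lemma commute_asc_of_forall {n m : ℕ} {x : BraidGroup n}
    (h : ∀ j, 1 ≤ j → j ≤ m → Commute x (σ n j)) : Commute x (asc n m) := by
  induction m with
  | zero => rw [asc_zero]; exact Commute.one_right _
  | succ m ih =>
    rw [asc_succ]
    exact (ih fun j h1 h2 => h j h1 (by omega)).mul_right (h _ (by omega) le_rfl)

lemma commute_twist_of_forall {n m : ℕ} {x : BraidGroup n}
    (h : ∀ j, 1 ≤ j → j ≤ m → Commute x (σ n j)) : Commute x (twist n (m + 1)) := by
  induction m with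
  | zero => simp [twist, asc_zero]
  | succ m ih =>
    exact (commute_asc_of_forall h).mul_right (ih fun j h1 h2 => h j h1 (by omega))

/-! ### Markov moves -/

lemma markov_mul_comm {n : ℕ} (x y : BraidGroup n) : MarkovEquiv ⟨n, x * y⟩ ⟨n, y * x⟩ := by
  have h := MarkovStep.conj y (x * y)
  rw [show y * (x * y) * y⁻¹ = y * x by group] at h
  exact Relation.EqvGen.rel _ _ h

/-- Removing one strand: with `Q = q + 1` and `m = a + Q`, the braid `δ_{m+1}^Q β` is Markov
equivalent to `δ_m^Q β (σ_{Q-1}⋯σ_1)`, for every `β ∈ B_Q`. -/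
lemma markov_step {a q : ℕ} (β : BraidGroup (q + 1)) :
    MarkovEquiv
      ⟨a + q + 2, asc (a + q + 2) (a + q + 1) ^ (q + 1) *
        braidInclude (show q + 1 ≤ a + q + 2 by omega) β⟩
      ⟨a + q + 1, asc (a + q + 1) (a + q) ^ (q + 1) *
        braidInclude (show q + 1 ≤ a + q + 1 by omega) (β * descFrom (q + 1) 0 q)⟩ := by
  set N := a + q + 1 with hN
  set b := braidInclude (show q + 1 ≤ N by omega) β with hb
  have e1 : asc (N + 1) (a + q + 1) ^ (q + 1) *
        braidInclude (show q + 1 ≤ N + 1 by omega) β =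
      asc (N + 1) (a + q) ^ (q + 1) * σ (N + 1) N *
        braidInclude (Nat.le_succ N) (descFrom N a q * b) := by
    rw [asc_pow_eq (by omega) a (q + 1) (by omega), descFrom, map_mul,
      include_descFrom _ (by omega), hb, include_include]
    simp only [mul_assoc, hN]
  have e2 : braidInclude (Nat.le_succ N) (descFrom N a q * b) *
        (asc (N + 1) (a + q) ^ (q + 1) * σ (N + 1) N) =
      braidInclude (Nat.le_succ N) (descFrom N a q * (b * asc N (a + q) ^ (q + 1))) *
        σ (N + 1) N := by
    simp only [map_mul, map_pow, include_asc (Nat.le_succ N) (show a + q < N by omega), mul_assoc]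
  have e3 : b * asc N (a + q) ^ (q + 1) * descFrom N a q =
      b * descFrom N 0 q * asc N (a + q) ^ (q + 1) := by
    rw [mul_assoc, asc_pow_mul_descFrom (by omega) (by omega) (by omega), mul_assoc]
  rw [map_mul, include_descFrom _ (by omega), ← hb]
  change MarkovEquiv ⟨N + 1, asc (N + 1) (a + q + 1) ^ (q + 1) *
        braidInclude (show q + 1 ≤ N + 1 by omega) β⟩ _
  rw [e1]
  refine (markov_mul_comm _ _).trans _ _ _ ?_
  rw [e2]
  refine ((Relation.EqvGen.rel _ _ (MarkovStep.stabPos _)).symm _ _).trans _ _ _ ?_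
  refine (markov_mul_comm _ _).trans _ _ _ ?_
  rw [e3]
  exact markov_mul_comm _ _

lemma markov_iterate {a q : ℕ} (β : BraidGroup (q + 1)) :
    MarkovEquiv
      ⟨a + q + 1, asc (a + q + 1) (a + q) ^ (q + 1) *
        braidInclude (show q + 1 ≤ a + q + 1 by omega) β⟩
      ⟨q + 1, asc (q + 1) q ^ (q + 1) * (β * descFrom (q + 1) 0 q ^ a)⟩ := by
  induction a generalizing β with
  | zero =>
    have key : ∀ (r : ℕ) (hr : r = q) (h : q + 1 ≤ r + 1),
        (⟨r + 1, asc (r + 1) r ^ (q + 1) * braidInclude h β⟩ : (n : ℕ) × BraidGroup n) =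
          ⟨q + 1, asc (q + 1) q ^ (q + 1) * β⟩ := by
      rintro r rfl h
      rw [include_self]
    rw [key _ (by omega), pow_zero, mul_one]
    exact Relation.EqvGen.refl _
  | succ a ih =>
    have key : ∀ (r : ℕ) (hr : r = a + q + 1) (h : q + 1 ≤ r + 1),
        (⟨r + 1, asc (r + 1) r ^ (q + 1) * braidInclude h β⟩ : (n : ℕ) × BraidGroup n) =
          ⟨a + q + 2, asc (a + q + 2) (a + q + 1) ^ (q + 1) *
            braidInclude (show q + 1 ≤ a + q + 2 by omega) β⟩ := by
      rintro r rfl h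
      rfl
    rw [key _ (by omega), pow_succ' (descFrom _ _ _), ← mul_assoc β]
    exact (markov_step β).trans _ _ _ (ih _)

/-- Lee's cable lemma, braid form. For integers `p, q, s` with
`2 ≤ q < p` and `s > 0`, the braid `(σ_1⋯σ_{p−1})^q (σ_1⋯σ_{q−1})^{qs}` in `B_p` is
Markov equivalent to `(σ_1⋯σ_{q−1})^{p+qs}` in `B_q`; that is, the K-link
`K((p,q),(q,qs))` is equal to the torus link `T(q, p+qs)`. -/
theorem klink_eq_torusLink (p q s : ℕ) (hq : 2 ≤ q) (hqp : q < p) (hs : 0 < s) :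
    MarkovEquiv ⟨p, asc p (p - 1) ^ q * asc p (q - 1) ^ (q * s)⟩
      ⟨q, asc q (q - 1) ^ (p + q * s)⟩ := by
  obtain ⟨r, rfl⟩ : ∃ r, q = r + 1 := ⟨q - 1, by omega⟩
  obtain ⟨a, rfl⟩ : ∃ a, p = a + r + 1 := ⟨p - (r + 1), by omega⟩
  have h := markov_iterate (a := a) (asc (r + 1) r ^ ((r + 1) * s))
  rw [map_pow, include_asc _ (Nat.lt_succ_self r)] at h
  refine h.trans _ _ _ ?_
  simp only [Nat.add_sub_cancel]
  set d := asc (r + 1) r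
  have hd : ∀ j, 1 ≤ j → j ≤ r → Commute (d ^ (r + 1)) (σ (r + 1) j) := fun j h1 h2 => by
    have := asc_pow_mul_σ_wrap (n := r + 1) (m := r) (a := 0) (q := r + 1) (j := j)
      (by omega) h1 (by omega) (by omega)
    rwa [zero_add] at this
  set u := twist (r + 1) r with hu
  have hdu : Commute (d ^ (r + 1)) u := by
    cases r with
    | zero => exact Commute.one_right _
    | succ r => exact commute_twist_of_forall fun j h1 h2 => hd j h1 (by omega)
  -- The half twist `u` takes `η = σ_r⋯σ_1` to `d = δ_{r+1}` and fixes the central power of `d`.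
  have hη : u * descFrom (r + 1) 0 r * u⁻¹ = d := by
    rw [twist_mul_descFrom, mul_inv_cancel_right]
  have hc : u * d ^ ((r + 1) * (s + 1)) * u⁻¹ = d ^ ((r + 1) * (s + 1)) := by
    rw [pow_mul, ← (hdu.pow_left (s + 1)).eq, mul_inv_cancel_right]
  have e := MarkovStep.conj u (d ^ (r + 1) * (d ^ ((r + 1) * s) * descFrom (r + 1) 0 r ^ a))
  have e' : u * (d ^ (r + 1) * (d ^ ((r + 1) * s) * descFrom (r + 1) 0 r ^ a)) * u⁻¹ =
      d ^ (a + r + 1 + (r + 1) * s) := by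
    rw [← mul_assoc (d ^ (r + 1)), ← pow_add, show r + 1 + (r + 1) * s = (r + 1) * (s + 1) by ring,
      show ∀ x y : BraidGroup (r + 1), u * (x * y) * u⁻¹ = u * x * u⁻¹ * (u * y * u⁻¹) by
        intro x y; group,
      hc, ← conj_pow, hη, ← pow_add]
    congr 1
    ring
  rw [e'] at e
  exact Relation.EqvGen.rel _ _ e
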